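/- Assume in addition L = ℓ − k > 0. There exists a function β₃, defined on a neighborhood of 0 with β₃(α) = k·α² + O(α³), such that for all sufficiently small (α, β) with β < β₁(α), the larger zero x⁺ = x⁺(α, β) of f_{α,β} satisfies: if α ≥ 0, then x⁺ > A_α = max(0, α) (so x⁺ lies in the interior of σ(α)); and if α < 0, then x⁺ > 0 when β < β₃(α), x⁺ = 0 = A_α when β = β₃(α), and x⁺ < 0 (so x⁺ ∉ σ(α)) when β₃(α) < β < β₁(α). -/

import Mathlib

theorem aux_deriv (P : ℝ → ℝ) (n : ℕ) (hP : ContDiffAt ℝ ((n + 1 : ℕ) : WithTop ℕ∞) P 0) :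
    ContDiffAt ℝ n (deriv P) 0 := by
  have h : ContDiffAt ℝ n (fderiv ℝ P) 0 := hP.fderiv_right (by simp)
  exact h.clm_apply contDiffAt_const

theorem aux_reg (P : ℝ → ℝ) (hP : ContDiffAt ℝ 3 P 0) (η : ℝ) (hη : 0 < η) :
    ∃ r > (0 : ℝ), ∃ C > (0 : ℝ), ∀ x : ℝ, |x| < r →
      DifferentiableAt ℝ P x ∧ DifferentiableAt ℝ (deriv P) x ∧
      |deriv (deriv P) x - deriv (deriv P) 0| < η ∧
      |deriv (deriv P) x - deriv (deriv P) 0| ≤ C * |x| := by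
  have h1 : ContDiffAt ℝ 2 (deriv P) 0 := aux_deriv P 2 (by exact_mod_cast hP)
  have h2 : ContDiffAt ℝ 1 (deriv (deriv P)) 0 := aux_deriv (deriv P) 1 (by exact_mod_cast h1)
  have e1 : ∀ᶠ x in nhds (0 : ℝ), DifferentiableAt ℝ P x :=
    (hP.eventually (by simp)).mono fun x hx => hx.differentiableAt (by norm_num)
  have e2 : ∀ᶠ x in nhds (0 : ℝ), DifferentiableAt ℝ (deriv P) x :=
    (h1.eventually (by simp)).mono fun x hx => hx.differentiableAt (by norm_num)
  have e3 : ∀ᶠ x in nhds (0 : ℝ), |deriv (deriv P) x - deriv (deriv P) 0| < η := by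
    have := Metric.tendsto_nhds.1 h2.continuousAt.tendsto η hη
    simpa [Real.dist_eq] using this
  obtain ⟨C, hC, e4⟩ := (h2.differentiableAt (by norm_num)).isBigO_sub.exists_pos
  have e4 := e4.bound
  obtain ⟨r, hr, h⟩ := Metric.eventually_nhds_iff.1 (e1.and (e2.and (e3.and e4)))
  refine ⟨r, hr, C, hC, fun x hx => ?_⟩
  have := h (y := x) (by simpa [Real.dist_eq] using hx)
  simpa [Real.norm_eq_abs] using this

theorem aux_step (g : ℝ → ℝ) (r C : ℝ) (hC : 0 < C) (n : ℕ) (h0 : g 0 = 0)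
    (hd : ∀ x : ℝ, |x| < r → DifferentiableAt ℝ g x)
    (hb : ∀ x : ℝ, |x| < r → |deriv g x| ≤ C * |x| ^ n) (x : ℝ) (hx : |x| < r) :
    |g x| ≤ C * |x| ^ (n + 1) := by
  have hs : ∀ y ∈ Metric.closedBall (0 : ℝ) |x|, |y| ≤ |x| := by
    intro y hy
    simpa [Real.dist_eq] using hy
  have := (convex_closedBall (0 : ℝ) |x|).norm_image_sub_le_of_norm_deriv_le (f := g)
    (C := C * |x| ^ n) (x := 0) (y := x)
    (fun y hy => hd y ((hs y hy).trans_lt hx))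
    (fun y hy => (hb y ((hs y hy).trans_lt hx)).trans (by
      have := hs y hy
      gcongr)) (by simp) (by simp)
  simp only [h0, sub_zero, Real.norm_eq_abs] at this
  calc |g x| ≤ C * |x| ^ n * |x| := this
    _ = _ := by ring

/- STATEMENT 9: the critical-crossing curve β = β₃(α) = kα² + O(α³) for the larger
zero x⁺ of f_{α,β}(x) = β + P(x) − Q(x − α), L = ℓ − k > 0: for small (α, β) with
β < β₁(α), if α ≥ 0 then x⁺ > A_α = max(0, α); if α < 0 then x⁺ > 0 when
β < β₃(α), x⁺ = 0 when β = β₃(α), and x⁺ < 0 when β₃(α) < β < β₁(α). -/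
theorem stmt_9 (ℓ k L : ℝ) (hℓ : ℓ < 0) (hk : k < 0) (hLdef : L = ℓ - k) (hLpos : 0 < L)
    (P Q : ℝ → ℝ)
    (hP : ContDiffAt ℝ 3 P 0) (hQ : ContDiffAt ℝ 3 Q 0)
    (hP0 : P 0 = 0) (hP1 : deriv P 0 = 0) (hP2 : deriv (deriv P) 0 = 2 * ℓ)
    (hQ0 : Q 0 = 0) (hQ1 : deriv Q 0 = 0) (hQ2 : deriv (deriv Q) 0 = 2 * k)
    (ε₀ : ℝ) (hε₀ : 0 < ε₀) (xc β₁ : ℝ → ℝ)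
    (hxc : ContDiffOn ℝ 1 xc (Set.Ioo (-ε₀) ε₀))
    (hβ₁ : ContDiffOn ℝ 1 β₁ (Set.Ioo (-ε₀) ε₀))
    (hasym : ∃ C > (0 : ℝ), ∀ α ∈ Set.Ioo (-ε₀) ε₀,
      |xc α + (k / L) * α| ≤ C * α ^ 2 ∧ |β₁ α - (k * ℓ / L) * α ^ 2| ≤ C * |α| ^ 3)
    (hdouble : ∀ α ∈ Set.Ioo (-ε₀) ε₀,
      β₁ α + P (xc α) - Q (xc α - α) = 0 ∧
      deriv (fun x => β₁ α + P x - Q (x - α)) (xc α) = 0) :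
    ∃ β₃ : ℝ → ℝ,
      -- β₃(α) = k·α² + O(α³)
      (∃ C > (0 : ℝ), ∃ ε₁ > (0 : ℝ), ∀ α : ℝ, |α| < ε₁ →
        |β₃ α - k * α ^ 2| ≤ C * |α| ^ 3) ∧
      -- position of the larger zero x⁺ relative to A_α = max(0, α)
      (∃ ε > (0 : ℝ), ∃ δ > (0 : ℝ), ∀ α β : ℝ, |α| < ε → |β| < ε → β < β₁ α →
        ∀ xm xp : ℝ, xm < xp → xm ∈ Set.Ioo (-δ) δ → xp ∈ Set.Ioo (-δ) δ →
          β + P xm - Q (xm - α) = 0 → β + P xp - Q (xp - α) = 0 →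
          (∀ x ∈ Set.Ioo (-δ) δ, β + P x - Q (x - α) = 0 → (x = xm ∨ x = xp)) →
          ((0 ≤ α → max 0 α < xp) ∧
           (α < 0 →
             (β < β₃ α → 0 < xp) ∧
             (β = β₃ α → xp = 0) ∧
             (β₃ α < β → xp < 0)))) := by
  obtain ⟨rP, hrP, CP, hCP, HP⟩ := aux_reg P hP (L / 2) (by linarith)
  obtain ⟨rQ, hrQ, CQ, hCQ, HQ⟩ := aux_reg Q hQ (L / 2) (by linarith)
  obtain ⟨C, hC, hasym⟩ := hasym
  refine ⟨fun α => Q (-α), ⟨CQ, hCQ, rQ, hrQ, ?_⟩, ?_⟩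
  · intro α hα
    have hd1 : ∀ x : ℝ, |x| < rQ →
        HasDerivAt (fun y => deriv Q y - 2 * k * y) (deriv (deriv Q) x - 2 * k) x := by
      intro x hx
      have := (HQ x hx).2.1.hasDerivAt.sub ((hasDerivAt_id x).const_mul (2 * k))
      rw [mul_one] at this
      exact this
    have hd0 : ∀ x : ℝ, |x| < rQ →
        HasDerivAt (fun y => Q y - k * y ^ 2) (deriv Q x - 2 * k * x) x := by
      intro x hx
      have := (HQ x hx).1.hasDerivAt.sub (((hasDerivAt_id x).pow 2).const_mul k)
      have e : deriv Q x - 2 * k * x = deriv Q x - k * (((2 : ℕ) : ℝ) * id x ^ (2 - 1) * 1) := by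
        simp; ring
      rw [e]
      exact this
    have s1 := aux_step (fun y => deriv Q y - 2 * k * y) rQ CQ hCQ 1 (by simp [hQ1])
      (fun x hx => (hd1 x hx).differentiableAt) (fun x hx => by
        rw [(hd1 x hx).deriv, ← hQ2]; simpa using (HQ x hx).2.2.2)
    have s0 := aux_step (fun y => Q y - k * y ^ 2) rQ CQ hCQ 2 (by simp [hQ0])
      (fun x hx => (hd0 x hx).differentiableAt) (fun x hx => by
        rw [(hd0 x hx).deriv]; exact s1 x hx) (-α) (by simpa using hα)
    simpa using s0
  obtain ⟨δ, hδ, hδP, hδQ⟩ : ∃ δ > 0, δ ≤ rP ∧ 2 * δ ≤ rQ :=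
    ⟨min rP (rQ / 2), by positivity, min_le_left _ _, by
      have := min_le_right rP (rQ / 2); linarith⟩
  have hkL : 0 < -(k / L) := by rw [← neg_div]; exact div_pos (by linarith) hLpos
  have hlL : 0 < -(k / L) - 1 := by
    have : -(k / L) - 1 = -ℓ / L := by rw [hLdef] at hLpos ⊢; field_simp; ring
    rw [this]; exact div_pos (by linarith) hLpos
  set m := -(k / L) with hm
  have hmC : 0 < m + C := by linarith
  refine ⟨min (min ε₀ δ) (min (min 1 (δ / (m + C))) ((m - 1) / C)), by positivity, δ, hδ, ?_⟩
  intro α β hα hβ hββ xm xp hlt hxm hxp hzm hzp hall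
  simp only [lt_min_iff] at hα
  obtain ⟨⟨hα0, hαδ⟩, ⟨hα1, hα2⟩, hα3⟩ := hα
  rw [lt_div_iff₀ hmC] at hα2
  rw [lt_div_iff₀ hC] at hα3
  have hmem : α ∈ Set.Ioo (-ε₀) ε₀ := abs_lt.1 hα0
  obtain ⟨hx1, -⟩ := hasym α hmem
  obtain ⟨-, hx2⟩ := hdouble α hmem
  have hsq : α ^ 2 = |α| * |α| := by rw [← sq, sq_abs]
  have habs : 0 ≤ |α| := abs_nonneg α
  have hx1' : |xc α - m * α| ≤ C * (|α| * |α|) := by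
    rw [← hsq]; convert hx1 using 2; rw [hm]; ring
  rw [abs_le] at hx1'
  have hCa : C * (|α| * |α|) ≤ (m - 1) * |α| := by
    have := mul_le_mul_of_nonneg_right hα3.le habs
    linarith
  have hCb : C * (|α| * |α|) ≤ C * |α| := by
    have := mul_le_mul_of_nonneg_left hα1.le (mul_nonneg hC.le habs)
    linarith
  have hma : |m * α| = m * |α| := by rw [abs_mul, abs_of_pos hkL]
  have hma1 := le_abs_self (m * α)
  have hma2 := neg_abs_le (m * α)
  have hxcm : xc α ∈ Set.Ioo (-δ) δ := by
    have e : |α| * (m + C) = m * |α| + C * |α| := by ring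
    rw [e] at hα2
    rw [hma] at hma1 hma2
    constructor <;> linarith
  have hdF : ∀ b : ℝ, ∀ x ∈ Set.Ioo (-δ) δ, HasDerivAt (fun x => b + P x - Q (x - α))
      (deriv P x - deriv Q (x - α)) x := by
    intro b x hx
    have hx' : |x| < δ := abs_lt.2 hx
    have hxa : |x - α| < rQ := by have := abs_sub x α; linarith
    have h1 := (HP x (by linarith)).1.hasDerivAt.const_add b
    have h2 := (HQ (x - α) hxa).1.hasDerivAt.comp_sub_const x α
    exact h1.sub h2
  have hdG : ∀ x ∈ Set.Ioo (-δ) δ, HasDerivAt (fun x => deriv P x - deriv Q (x - α))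
      (deriv (deriv P) x - deriv (deriv Q) (x - α)) x := by
    intro x hx
    have hx' : |x| < δ := abs_lt.2 hx
    have hxa : |x - α| < rQ := by have := abs_sub x α; linarith
    have h1 := (HP x (by linarith)).2.1.hasDerivAt
    have h2 := (HQ (x - α) hxa).2.1.hasDerivAt.comp_sub_const x α
    exact h1.sub h2
  have hG : StrictMonoOn (fun x => deriv P x - deriv Q (x - α)) (Set.Ioo (-δ) δ) := by
    apply strictMonoOn_of_deriv_pos (convex_Ioo _ _)
    · exact fun x hx => (hdG x hx).continuousAt.continuousWithinAt
    · intro x hx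
      rw [interior_Ioo] at hx
      rw [(hdG x hx).deriv]
      have hx' : |x| < δ := abs_lt.2 hx
      have hxa : |x - α| < rQ := by have := abs_sub x α; linarith
      have h1 := abs_lt.1 (HP x (by linarith)).2.2.1
      have h2 := abs_lt.1 (HQ (x - α) hxa).2.2.1
      rw [hP2] at h1
      rw [hQ2] at h2
      linarith
  rw [(hdF (β₁ α) _ hxcm).deriv] at hx2
  have hsub : ∀ x ∈ Set.Icc xm xp, x ∈ Set.Ioo (-δ) δ := fun x hx =>
    ⟨hxm.1.trans_le hx.1, hx.2.trans_lt hxp.2⟩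
  obtain ⟨c, hc, hc0⟩ := exists_hasDerivAt_eq_zero hlt
    (fun x hx => (hdF β x (hsub x hx)).continuousAt.continuousWithinAt)
    (hzm.trans hzp.symm) (fun x hx => hdF β x (hsub x (Set.Ioo_subset_Icc_self hx)))
  have hcx : c = xc α := hG.injOn (hsub c (Set.Ioo_subset_Icc_self hc)) hxcm (hc0.trans hx2.symm)
  rw [hcx] at hc
  constructor
  · intro h
    rw [max_eq_right h]
    have e : (m - 1) * |α| = m * α - α := by rw [abs_of_nonneg h]; ring
    rw [e] at hCa
    linarith [hc.2, hx1'.1]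
  · intro h
    have hxcneg : xc α < 0 := by
      have e : (m - 1) * |α| = α - m * α := by rw [abs_of_neg h]; ring
      rw [e] at hCa
      linarith [hx1'.2]
    have hF : StrictMonoOn (fun x => β + P x - Q (x - α)) (Set.Ico (xc α) δ) := by
      have hs : ∀ x ∈ Set.Ico (xc α) δ, x ∈ Set.Ioo (-δ) δ := fun x hx =>
        ⟨hxcm.1.trans_le hx.1, hx.2⟩
      apply strictMonoOn_of_deriv_pos (convex_Ico _ _)
      · exact fun x hx => (hdF β x (hs x hx)).continuousAt.continuousWithinAt
      · intro x hx
        rw [interior_Ico] at hx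
        have hx3 := hs x (Set.Ioo_subset_Ico_self hx)
        rw [(hdF β x hx3).deriv, ← hx2]
        exact hG hxcm hx3 hx.1
    have m0 : (0 : ℝ) ∈ Set.Ico (xc α) δ := ⟨hxcneg.le, hδ⟩
    have mp : xp ∈ Set.Ico (xc α) δ := ⟨hc.2.le, hxp.2⟩
    refine ⟨fun hb => ?_, fun hb => ?_, fun hb => ?_⟩
    · rw [← hF.lt_iff_lt m0 mp]
      simp only [hzp, hP0, zero_sub]; linarith
    · apply hF.injOn mp m0
      simp only [hzp, hP0, zero_sub]; linarith
    · rw [← hF.lt_iff_lt mp m0]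
      simp only [hzp, hP0, zero_sub]; linarith
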